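/- For every nonempty open set U ⊆ ℝ × ℝ and every finite family g₁, …, gₙ : ℝ × ℝ → ℝ of affine functions (gᵢ(s, z) = aᵢ·s + bᵢ·z + cᵢ), it is not the case that for every (s, z) ∈ U there exists an index i with s·z = gᵢ(s, z). In other words, the bilinear function f⋆(s, z) = s·z cannot be realized on any set with nonempty interior as a pointwise selection among finitely many affine functions. -/

import Mathlib

/-!
Restrict `s * z` and the affine functions to a diagonal line `t ↦ (s + t, z + t)`. There `s * z`
is a monic quadratic in `t`, so it agrees with each affine function at finitely many points only,
whereas the line meets an open set in as many points as the field has. Hence fewer affine functions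
than there are scalars cannot suffice; the constant functions show that this bound is sharp.
-/

open Cardinal Polynomial Set Topology

universe u

theorem exists_infinite_of_subset_iUnion_of_mk_lt {α ι : Type u} {T : Set α} {S : ι → Set α}
    (hT : T.Infinite) (hι : #ι < #T) (hTS : T ⊆ ⋃ i, S i) : ∃ i, (S i).Infinite := by
  have := hT.to_subtype
  choose index mem_index using fun t : T ↦ mem_iUnion.1 (hTS t.2)
  obtain ⟨i, hi⟩ := exists_infinite_fiber index hι
  refine ⟨i, ((infinite_coe_iff.1 hi).image Subtype.val_injective.injOn).mono ?_⟩
  rintro _ ⟨t, rfl, rfl⟩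
  exact mem_index t

theorem finite_setOfPred_diagonal_mul_eq_affine {R : Type*} [CommRing R] [IsDomain R]
    (s z a b c : R) :
    {t : R | (s + t) * (z + t) = a * (s + t) + b * (z + t) + c}.Finite := by
  have monic : (X ^ 2 + C (s + z - a - b) * X + C (s * z - a * s - b * z - c) : R[X]).Monic := by
    monicity!
  refine (finite_setOfPred_isRoot monic.ne_zero).subset fun t ht ↦ ?_
  simp only [mem_ofPred_eq, IsRoot.def, eval_add, eval_mul, eval_pow, eval_X, eval_C] at ht ⊢
  linear_combination ht

theorem mk_diagonal_preimage_of_mem_nhds {K : Type*} [NontriviallyNormedField K]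
    {U : Set (K × K)} {p : K × K} (hU : U ∈ 𝓝 p) :
    #((fun t : K ↦ (p.1 + t, p.2 + t)) ⁻¹' U) = #K := by
  have continuous_diagonal : Continuous fun t : K ↦ (p.1 + t, p.2 + t) := by fun_prop
  refine cardinal_eq_of_mem_nhds_zero K (continuous_diagonal.continuousAt.preimage_mem_nhds ?_)
  simpa only [add_zero] using hU

theorem bilinear_not_piecewise_affine_on_open_general {K ι : Type u} [NontriviallyNormedField K]
    {U : Set (K × K)} (hU : (interior U).Nonempty) (hι : #ι < #K) (a b c : ι → K) :
    ¬ ∀ p ∈ U, ∃ i, p.1 * p.2 = a i * p.1 + b i * p.2 + c i := by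
  intro h
  obtain ⟨⟨s, z⟩, hp⟩ := hU
  have mk_line := mk_diagonal_preimage_of_mem_nhds (mem_interior_iff_mem_nhds.1 hp)
  have line_infinite : ((fun t : K ↦ (s + t, z + t)) ⁻¹' U).Infinite := by
    rw [← infinite_coe_iff, infinite_iff, mk_line]
    exact aleph0_le_mk K
  obtain ⟨i, hi⟩ := exists_infinite_of_subset_iUnion_of_mk_lt line_infinite (mk_line ▸ hι)
    fun t ht ↦ mem_iUnion.2 (h (s + t, z + t) ht)
  exact hi (finite_setOfPred_diagonal_mul_eq_affine s z (a i) (b i) (c i))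

/-- The bilinear function `f⋆(s, z) = s * z` cannot be realized on any nonempty
open subset of `ℝ × ℝ` as a pointwise selection among finitely many affine
functions `gᵢ(s, z) = aᵢ*s + bᵢ*z + cᵢ`. -/
theorem bilinear_not_piecewise_affine_on_open
    (U : Set (ℝ × ℝ)) (hU : IsOpen U) (hne : U.Nonempty)
    (n : ℕ) (a b c : Fin n → ℝ) :
    ¬ ∀ p ∈ U, ∃ i : Fin n, p.1 * p.2 = a i * p.1 + b i * p.2 + c i :=
  bilinear_not_piecewise_affine_on_open_general (hU.interior_eq.symm ▸ hne)
    ((mk_lt_aleph0 (α := Fin n)).trans_le (aleph0_le_mk ℝ)) a b c
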